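/- Assume N ≥ 2 and that the two layers are identical, L₁ = L₂ = L₀. Then for every nonnegative weight vector w ∈ ℝ^N with Σᵢ wᵢ = c, the algebraic connectivity of the supra-Laplacian satisfies λ₂(L(w)) ≤ min{2c/N, λ₂(L₀)}; in particular, increasing the budget beyond (N/2)·λ₂(L₀) cannot increase the algebraic connectivity regardless of the weight allocation. -/

import Mathlib

open Matrix

/-- The supra-Laplacian of a two-layer multiplex with layer Laplacians `L₁`, `L₂`
and one-to-one inter-layer weights `w`: the block matrix
`[[L₁ + W, −W], [−W, L₂ + W]]` with `W = diag w`. -/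
noncomputable def supraLaplacian {N : ℕ} (L₁ L₂ : Matrix (Fin N) (Fin N) ℝ)
    (w : Fin N → ℝ) : Matrix (Fin N ⊕ Fin N) (Fin N ⊕ Fin N) ℝ :=
  Matrix.fromBlocks (L₁ + Matrix.diagonal w) (-Matrix.diagonal w)
    (-Matrix.diagonal w) (L₂ + Matrix.diagonal w)

/-- Algebraic connectivity: the minimum of `vᵀ M v` over unit vectors `v`
orthogonal to the all-ones vector (the minimum is attained, so it equals the inf). -/
noncomputable def lambda2 {n : Type*} [Fintype n] (M : Matrix n n ℝ) : ℝ :=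
  sInf {x : ℝ | ∃ v : n → ℝ, v ⬝ᵥ v = 1 ∧ v ⬝ᵥ (fun _ => 1) = 0 ∧ x = v ⬝ᵥ M *ᵥ v}

/-!
The upper bounds are Rayleigh quotients of test vectors orthogonal to `𝟙`. The vector `(𝟙, -𝟙)`
is annihilated by the layers and sees only the inter-layer weights, which gives `2c / N`; a vector
`(v, v)` is blind to the weights and sees only the average of the layers, which gives
`λ₂((L₁ + L₂) / 2)`.
-/

lemma sumElim_dotProduct_one {m n R : Type*} [Fintype m] [Fintype n] [NonAssocSemiring R]
    (x : m → R) (y : n → R) : Sum.elim x y ⬝ᵥ 1 = x ⬝ᵥ 1 + y ⬝ᵥ 1 := by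
  rw [← Sum.elim_one_one, sumElim_dotProduct_sumElim]

section AlgebraicConnectivity

variable {n : Type*} [Fintype n] {M : Matrix n n ℝ}

lemma norm_le_one_of_dotProduct_self_le_one {v : n → ℝ} (hv : v ⬝ᵥ v ≤ 1) : ‖v‖ ≤ 1 := by
  refine (pi_norm_le_iff_of_nonneg zero_le_one).2 fun i => ?_
  have hi : v i * v i ≤ v ⬝ᵥ v :=
    Finset.single_le_sum (f := fun j => v j * v j) (fun j _ => mul_self_nonneg (v j))
      (Finset.mem_univ i)
  rw [← sq] at hi
  exact (sq_le_one_iff_abs_le_one _).1 (hi.trans hv)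

lemma bddBelow_image_dotProduct_mulVec (M : Matrix n n ℝ) :
    BddBelow ((fun v : n → ℝ => v ⬝ᵥ M *ᵥ v) '' {v | v ⬝ᵥ v = 1}) := by
  have hcont : Continuous fun v : n → ℝ => v ⬝ᵥ M *ᵥ v := by fun_prop
  refine ((isCompact_closedBall (0 : n → ℝ) 1).bddBelow_image hcont.continuousOn).mono
    (Set.image_mono fun v hv => ?_)
  exact mem_closedBall_zero_iff.2 (norm_le_one_of_dotProduct_self_le_one hv.le)

lemma lambda2_le_dotProduct_mulVec {v : n → ℝ} (hv : v ⬝ᵥ v = 1) (hv₁ : v ⬝ᵥ 1 = 0) :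
    lambda2 M ≤ v ⬝ᵥ M *ᵥ v := by
  refine csInf_le ((bddBelow_image_dotProduct_mulVec M).mono ?_) ⟨v, hv, hv₁, rfl⟩
  rintro _ ⟨u, hu, -, rfl⟩
  exact ⟨u, hu, rfl⟩

lemma lambda2_mul_dotProduct_self_le {v : n → ℝ} (hv₁ : v ⬝ᵥ 1 = 0) :
    lambda2 M * (v ⬝ᵥ v) ≤ v ⬝ᵥ M *ᵥ v := by
  obtain rfl | hv := eq_or_ne v 0
  · simp
  have hpos : 0 < v ⬝ᵥ v := by simpa using dotProduct_star_self_pos_iff.2 hv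
  have hsq : (√(v ⬝ᵥ v))⁻¹ * (√(v ⬝ᵥ v))⁻¹ = (v ⬝ᵥ v)⁻¹ := by
    rw [← mul_inv, Real.mul_self_sqrt hpos.le]
  have hunit : ((√(v ⬝ᵥ v))⁻¹ • v) ⬝ᵥ ((√(v ⬝ᵥ v))⁻¹ • v) = 1 := by
    rw [smul_dotProduct, dotProduct_smul, smul_smul, hsq, smul_eq_mul, inv_mul_cancel₀ hpos.ne']
  have hle := lambda2_le_dotProduct_mulVec (M := M) hunit (by rw [smul_dotProduct, hv₁, smul_zero])
  rwa [mulVec_smul, smul_dotProduct, dotProduct_smul, smul_smul, hsq, smul_eq_mul,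
    inv_mul_eq_div, le_div_iff₀ hpos] at hle

lemma exists_dotProduct_self_eq_one_and_dotProduct_one_eq_zero [Nontrivial n] :
    ∃ v : n → ℝ, v ⬝ᵥ v = 1 ∧ v ⬝ᵥ 1 = 0 := by
  classical
  obtain ⟨i, j, hij⟩ := exists_pair_ne n
  have hs : √(1 / 2 : ℝ) * √(1 / 2) = 1 / 2 := Real.mul_self_sqrt (by norm_num)
  refine ⟨Pi.single i √(1 / 2) - Pi.single j √(1 / 2), ?_, by simp [sub_dotProduct]⟩
  simp only [sub_dotProduct, single_dotProduct, Pi.sub_apply, Pi.single_eq_same,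
    Pi.single_eq_of_ne hij, Pi.single_eq_of_ne hij.symm]
  linarith

lemma le_lambda2 [Nontrivial n] {a : ℝ}
    (h : ∀ v : n → ℝ, v ⬝ᵥ v = 1 → v ⬝ᵥ 1 = 0 → a ≤ v ⬝ᵥ M *ᵥ v) : a ≤ lambda2 M := by
  obtain ⟨u, hu, hu₁⟩ := exists_dotProduct_self_eq_one_and_dotProduct_one_eq_zero (n := n)
  refine le_csInf ⟨_, u, hu, hu₁, rfl⟩ ?_
  rintro _ ⟨v, hv, hv₁, rfl⟩
  exact h v hv hv₁

end AlgebraicConnectivity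

section SupraLaplacian

variable {N : ℕ} {L₁ L₂ : Matrix (Fin N) (Fin N) ℝ}

lemma sumElim_dotProduct_supraLaplacian_mulVec (L₁ L₂ : Matrix (Fin N) (Fin N) ℝ)
    (w x y : Fin N → ℝ) :
    Sum.elim x y ⬝ᵥ supraLaplacian L₁ L₂ w *ᵥ Sum.elim x y
      = x ⬝ᵥ L₁ *ᵥ x + y ⬝ᵥ L₂ *ᵥ y + ∑ i, w i * (x i - y i) ^ 2 := by
  have hcoupling : ∑ i, w i * (x i - y i) ^ 2
      = x ⬝ᵥ diagonal w *ᵥ x - x ⬝ᵥ diagonal w *ᵥ y - y ⬝ᵥ diagonal w *ᵥ x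
        + y ⬝ᵥ diagonal w *ᵥ y := by
    simp only [dotProduct, mulVec_diagonal, ← Finset.sum_sub_distrib, ← Finset.sum_add_distrib]
    exact Finset.sum_congr rfl fun i _ => by ring
  rw [hcoupling, supraLaplacian, fromBlocks_mulVec]
  simp only [Sum.elim_comp_inl, Sum.elim_comp_inr, sumElim_dotProduct_sumElim, add_mulVec,
    neg_mulVec, dotProduct_add, dotProduct_neg]
  ring

lemma lambda2_supraLaplacian_mul_natCast_le (hL₁ : L₁ *ᵥ 1 = 0) (hL₂ : L₂ *ᵥ 1 = 0)
    (w : Fin N → ℝ) : lambda2 (supraLaplacian L₁ L₂ w) * N ≤ 2 * ∑ i, w i := by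
  have horth : Sum.elim (1 : Fin N → ℝ) (-1 : Fin N → ℝ) ⬝ᵥ 1 = 0 := by
    rw [sumElim_dotProduct_one, neg_dotProduct, add_neg_cancel]
  have hle := lambda2_mul_dotProduct_self_le (M := supraLaplacian L₁ L₂ w) horth
  have hnorm : Sum.elim (1 : Fin N → ℝ) (-1 : Fin N → ℝ) ⬝ᵥ Sum.elim 1 (-1) = 2 * N := by
    simp [sumElim_dotProduct_sumElim, two_mul]
  have hquad : Sum.elim (1 : Fin N → ℝ) (-1 : Fin N → ℝ) ⬝ᵥ
      supraLaplacian L₁ L₂ w *ᵥ Sum.elim 1 (-1) = 4 * ∑ i, w i := by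
    rw [sumElim_dotProduct_supraLaplacian_mulVec, mulVec_neg, hL₁, hL₂, Finset.mul_sum]
    norm_num [mul_comm]
  rw [hnorm, hquad] at hle
  linarith

lemma lambda2_supraLaplacian_le_lambda2_midpoint [Nontrivial (Fin N)]
    (L₁ L₂ : Matrix (Fin N) (Fin N) ℝ) (w : Fin N → ℝ) :
    lambda2 (supraLaplacian L₁ L₂ w) ≤ lambda2 (midpoint ℝ L₁ L₂) := by
  refine le_lambda2 fun v hv hv₁ => ?_
  have horth : Sum.elim v v ⬝ᵥ 1 = 0 := by rw [sumElim_dotProduct_one, hv₁, add_zero]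
  have hle := lambda2_mul_dotProduct_self_le (M := supraLaplacian L₁ L₂ w) horth
  have hquad : Sum.elim v v ⬝ᵥ supraLaplacian L₁ L₂ w *ᵥ Sum.elim v v
      = v ⬝ᵥ L₁ *ᵥ v + v ⬝ᵥ L₂ *ᵥ v := by
    simp [sumElim_dotProduct_supraLaplacian_mulVec]
  have hmid : v ⬝ᵥ midpoint ℝ L₁ L₂ *ᵥ v = (v ⬝ᵥ L₁ *ᵥ v + v ⬝ᵥ L₂ *ᵥ v) / 2 := by
    rw [midpoint_eq_smul_add, smul_mulVec, dotProduct_smul, add_mulVec, dotProduct_add,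
      invOf_eq_inv, smul_eq_mul, inv_mul_eq_div]
  rw [sumElim_dotProduct_sumElim, hv, hquad] at hle
  linarith

end SupraLaplacian

theorem stmt10_general {N : ℕ} (hN : 2 ≤ N) {L₁ L₂ : Matrix (Fin N) (Fin N) ℝ}
    (hL₁ : L₁ *ᵥ 1 = 0) (hL₂ : L₂ *ᵥ 1 = 0)
    (w : Fin N → ℝ) (c : ℝ) (hc : c = ∑ i, w i) :
    lambda2 (supraLaplacian L₁ L₂ w) ≤ min (2 * c / N) (lambda2 (midpoint ℝ L₁ L₂)) := by
  have : Nontrivial (Fin N) := Fin.nontrivial_iff_two_le.2 hN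
  have hN₀ : (0 : ℝ) < N := by positivity
  refine le_min ?_ (lambda2_supraLaplacian_le_lambda2_midpoint L₁ L₂ w)
  rw [le_div_iff₀ hN₀, hc]
  exact lambda2_supraLaplacian_mul_natCast_le hL₁ hL₂ w

theorem stmt10 {N : ℕ} (hN : 2 ≤ N)
    (L₀ : Matrix (Fin N) (Fin N) ℝ)
    (hL₀ : L₀.PosSemidef) (hL₀1 : L₀ *ᵥ (fun _ => 1) = 0)
    (w : Fin N → ℝ) (hw : ∀ i, 0 ≤ w i) (c : ℝ) (hc : c = ∑ i, w i) :
    lambda2 (supraLaplacian L₀ L₀ w) ≤ min (2 * c / N) (lambda2 L₀) := by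
  simpa only [midpoint_self] using stmt10_general hN hL₀1 hL₀1 w c hc
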